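/- Let A be the ring of integers of a global field (either a number field or a global function field). Let G be a finite subgroup of GL_n(A) acting linearly on R = A[X_1,...,X_n] (fixing A). For each prime p dividing |G| choose a Sylow p-subgroup H_p of G. If R^{H_p} is Cohen-Macaulay for all primes p dividing |G|, then R^G is Cohen-Macaulay. -/

import Mathlib

/-- A Noetherian local ring is Cohen–Macaulay if it admits a regular sequence, consisting of
elements of the maximal ideal, whose length equals the Krull dimension of the ring. -/
def IsCohenMacaulayLocalRing (R : Type*) [CommRing R] [IsLocalRing R] : Prop :=
  ∃ (n : ℕ) (rs : List R), ringKrullDim R = n ∧ rs.length = n ∧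
    (∀ x ∈ rs, x ∈ IsLocalRing.maximalIdeal R) ∧ RingTheory.Sequence.IsRegular R rs

/-- A Noetherian ring is Cohen–Macaulay if all its localizations at prime ideals are
Cohen–Macaulay local rings. -/
def IsCohenMacaulayRing (R : Type*) [CommRing R] : Prop :=
  IsNoetherianRing R ∧
    ∀ (P : Ideal R) (_ : P.IsPrime), IsCohenMacaulayLocalRing (Localization.AtPrime P)

/-- The ring of invariants `R^G` of a subgroup `G ⊆ GL_n(A)` acting linearly on the
polynomial ring `R = A[X_1, …, X_n]` (fixing `A`), via the standard action of `GL_n(A)`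
on the `A`-span of `X_1, …, X_n`. -/
noncomputable def glInvariants {A : Type*} [CommRing A] {n : ℕ}
    (G : Subgroup (Matrix.GeneralLinearGroup (Fin n) A)) :
    Subalgebra A (MvPolynomial (Fin n) A) where
  carrier := {f | ∀ g ∈ G,
    MvPolynomial.aeval
      (fun i => ∑ j, ((g : Matrix (Fin n) (Fin n) A) i j) • MvPolynomial.X j) f = f}
  mul_mem' := by
    intro a b ha hb g hg
    rw [map_mul, ha g hg, hb g hg]
  add_mem' := by
    intro a b ha hb g hg
    rw [map_add, ha g hg, hb g hg]
  algebraMap_mem' := fun a g _ => MvPolynomial.aeval_C _ a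

/-- Witness that `A` is (isomorphic to) the ring of integers of a number field. -/
structure NumberRingOfIntegersData (A : Type*) [CommRing A] where
  K : Type
  [fieldK : Field K]
  numberField : NumberField K
  equiv : A ≃+* NumberField.RingOfIntegers K

/-- Witness that `A` is (isomorphic to) the ring of integers of a global function field,
i.e. the integral closure of `F_q[t]` in a finite extension of `F_q(t)`. -/
structure FunctionRingOfIntegersData (A : Type*) [CommRing A] where
  Fq : Type
  K : Type
  [fieldFq : Field Fq]
  [finiteFq : Finite Fq]
  [fieldK : Field K]
  [algP : Algebra (Polynomial Fq) K]
  [algR : Algebra (RatFunc Fq) K]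
  [tower : IsScalarTower (Polynomial Fq) (RatFunc Fq) K]
  functionField : FunctionField Fq K
  equiv : A ≃+* ↥(FunctionField.ringOfIntegers Fq K)

/-- `A` is the ring of integers of a global field (a number field or a global function
field). -/
def IsRingOfIntegersOfGlobalField (A : Type*) [CommRing A] : Prop :=
  Nonempty (NumberRingOfIntegersData A) ∨ Nonempty (FunctionRingOfIntegersData A)

section DepthLemmas

open RingTheory.Sequence IsLocalRing CategoryTheory Abelian Pointwise

universe u

theorem ext_quot_aux {B : Type u} [CommRing B] (N M : ModuleCat.{u} B) (n : ℕ) (x : B)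
    (hx : IsSMulRegular M x)
    (h_ext : ∀ i < n + 1, Subsingleton (Ext N M i)) :
    ∀ i < n, Subsingleton (Ext N (ModuleCat.of B (QuotSMulTop x M)) i) := by
  intro i hi
  have zero1 := AddCommGrpCat.isZero_of_iff_subsingleton.mpr (h_ext i (by omega))
  have zero2 := AddCommGrpCat.isZero_of_iff_subsingleton.mpr (h_ext (i + 1) (by omega))
  exact AddCommGrpCat.subsingleton_of_isZero <| ShortComplex.Exact.isZero_of_both_zeros
    ((Ext.covariant_sequence_exact₃' N hx.smulShortComplex_shortExact) i (i + 1) rfl)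
    (zero1.eq_zero_of_src _) (zero2.eq_zero_of_tgt _)

theorem exists_regular_of_ext {B : Type u} [CommRing B] [IsNoetherianRing B]
    (N : ModuleCat.{u} B) [Module.Finite B N] (rs : List B) :
    ∀ (M : ModuleCat.{u} B) [Module.Finite B M] (n : ℕ),
    (∀ i < n, Subsingleton (Ext N M i)) → rs.length < n → IsWeaklyRegular M rs →
    ∃ y ∈ Module.annihilator B N,
      IsSMulRegular (M ⧸ (Ideal.ofList rs • ⊤ : Submodule B M)) y := by
  induction rs with
  | nil =>
    intro M _ n h hn _
    have : Subsingleton (N ⟶ M) := Ext.addEquiv₀.subsingleton_congr.mp (h 0 hn)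
    have : Subsingleton (N →ₗ[B] M) := ModuleCat.homAddEquiv.symm.subsingleton
    obtain ⟨x, mem_ann, hx⟩ := IsSMulRegular.subsingleton_linearMap_iff.mp this
    refine ⟨x, mem_ann, ?_⟩
    have e := Submodule.quotEquivOfEqBot (Ideal.ofList ([] : List B) • ⊤ : Submodule B M)
      (by simp)
    exact (e.isSMulRegular_congr x).mpr hx
  | cons r rs ih =>
    intro M _ n h hn hreg
    obtain ⟨m, rfl⟩ : ∃ m, n = m + 1 := ⟨n - 1, by simp at hn; omega⟩
    rw [isWeaklyRegular_cons_iff] at hreg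
    obtain ⟨y, hy, hy'⟩ := ih (ModuleCat.of B (QuotSMulTop r M)) m
      (ext_quot_aux N M m r hreg.1 h) (by simpa using hn) hreg.2
    refine ⟨y, hy, ?_⟩
    exact ((Submodule.quotOfListConsSMulTopEquivQuotSMulTopInner M r rs).isSMulRegular_congr y).mpr
      hy'

theorem exists_regular_of_length_lt {B : Type u} [CommRing B] [IsLocalRing B] [IsNoetherianRing B]
    (ys : List B) (hys : ∀ y ∈ ys, y ∈ maximalIdeal B) (hreg : IsRegular B ys)
    (rs : List B) (hrs : IsWeaklyRegular B rs) (hlt : rs.length < ys.length) :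
    ∃ y ∈ maximalIdeal B, ∀ b : B, y * b ∈ Ideal.ofList rs → b ∈ Ideal.ofList rs := by
  have hsupp : Module.support B (ModuleCat.of B (B ⧸ maximalIdeal B)) ⊆
      PrimeSpectrum.zeroLocus (maximalIdeal B) := by
    rw [Module.support_eq_zeroLocus, Ideal.annihilator_quotient]
  have h := ModuleCat.subsingleton_ext_of_exists_isRegular (maximalIdeal B)
    (ModuleCat.of B (B ⧸ maximalIdeal B)) hsupp (ModuleCat.of B B)
    (by
      rw [lt_top_iff_ne_top, Ideal.smul_eq_mul, Ideal.mul_top]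
      exact Ideal.IsPrime.ne_top') ys hys hreg
  obtain ⟨y, hy, hy'⟩ := exists_regular_of_ext (ModuleCat.of B (B ⧸ maximalIdeal B)) rs
    (ModuleCat.of B B) _ h hlt hrs
  refine ⟨y, ?_, ?_⟩
  · simpa [Ideal.annihilator_quotient] using hy
  · intro b hb
    have := mem_of_isSMulRegular_quotient_of_smul_mem hy' (x := b) (by simpa using hb)
    simpa using this

/-- weak regularity descends along (quasi-)retracts -/
theorem isWeaklyRegular_of_retract {B : Type*} [CommRing B] {M N : Type*} [AddCommGroup M]
    [Module B M] [AddCommGroup N] [Module B N] (f : M →ₗ[B] N) (g : N →ₗ[B] M) (c : B)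
    (hc : IsUnit c) (hgf : ∀ m, g (f m) = c • m) (rs : List B) (h : IsWeaklyRegular N rs) :
    IsWeaklyRegular M rs := by
  refine ⟨fun i hi => ?_⟩
  have h1 := h.regular_mod_prev i hi
  rw [isSMulRegular_quotient_iff_mem_of_smul_mem] at h1 ⊢
  intro m hm
  have h2 := h1 (f m) (by
    rw [← map_smul]
    have := Submodule.mem_map_of_mem (f := f) hm
    rw [Submodule.map_smul''] at this
    exact Submodule.smul_mono le_rfl le_top this)
  have h3 := Submodule.mem_map_of_mem (f := g) h2
  rw [Submodule.map_smul'', hgf] at h3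
  have h4 := Submodule.smul_mono (le_refl (Ideal.ofList (rs.take i)))
    (le_top : (Submodule.map g ⊤ : Submodule B M) ≤ ⊤) h3
  obtain ⟨u, rfl⟩ := hc
  have := Submodule.smul_mem _ (↑u⁻¹ : B) h4
  rwa [smul_smul, Units.inv_mul, one_smul] at this

end DepthLemmas
section MainLocal

open RingTheory.Sequence IsLocalRing

theorem exists_weaklyRegular_of_localizations {S T : Type*} [CommRing S] [IsLocalRing S]
    [CommRing T] [IsNoetherianRing T] [Algebra S T] (d : ℕ)
    (hQ : ∀ (Q : Ideal T) (_ : Q.IsPrime), Q.comap (algebraMap S T) = maximalIdeal S →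
      ∃ ys : List (Localization.AtPrime Q), d ≤ ys.length ∧
        (∀ y ∈ ys, y ∈ maximalIdeal (Localization.AtPrime Q)) ∧
        IsRegular (Localization.AtPrime Q) ys) :
    ∀ k ≤ d, ∃ rs : List S, rs.length = k ∧ (∀ r ∈ rs, r ∈ maximalIdeal S) ∧
      IsWeaklyRegular T rs := by
  intro k
  induction k with
  | zero => exact fun _ => ⟨[], rfl, by simp, by simp⟩
  | succ k ih =>
    intro hk
    obtain ⟨rs, hlen, hmem, hreg⟩ := ih (by omega)
    set J : Ideal S := Ideal.ofList rs with hJ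
    set I : Ideal T := J.map (algebraMap S T) with hI
    have hmemI : ∀ t : T, t ∈ (J • ⊤ : Submodule S T) ↔ t ∈ I := by
      intro t
      rw [Ideal.smul_top_eq_map]
      rfl
    suffices h : ∃ x ∈ maximalIdeal S, ∀ t : T, algebraMap S T x * t ∈ I → t ∈ I by
      obtain ⟨x, hx, hx'⟩ := h
      refine ⟨rs ++ [x], by simp [hlen], ?_, ?_⟩
      · intro r hr
        rcases List.mem_append.mp hr with h | h
        · exact hmem r h
        · rw [List.mem_singleton.mp h]; exact hx
      · rw [isWeaklyRegular_append_iff, isWeaklyRegular_singleton_iff,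
          isSMulRegular_quotient_iff_mem_of_smul_mem]
        refine ⟨hreg, fun t ht => ?_⟩
        rw [hmemI] at ht ⊢
        rw [Algebra.smul_def] at ht
        exact hx' t ht
    by_contra hcon
    push Not at hcon
    -- all elements of the maximal ideal are in the union of associated primes
    have hsub : (maximalIdeal S : Set S) ⊆
        ⋃ Q ∈ associatedPrimes T (T ⧸ I), (Q.comap (algebraMap S T) : Set S) := by
      intro x hx
      obtain ⟨t, ht, ht'⟩ := hcon x hx
      have : algebraMap S T x ∈ {r : T | IsSMulRegular (T ⧸ I) r}ᶜ := by
        intro (h : IsSMulRegular (T ⧸ I) _)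
        rw [isSMulRegular_quotient_iff_mem_of_smul_mem] at h
        exact ht' (h t ht)
      rw [← biUnion_associatedPrimes_eq_compl_regular] at this
      simpa using this
    obtain ⟨Q, hQass, hQle⟩ := (Ideal.subset_union_prime_finite
      (associatedPrimes.finite T (T ⧸ I)) ⊥ ⊥ (fun Q hQ _ _ =>
        have := IsAssociatedPrime.isPrime hQ
        Ideal.IsPrime.comap (algebraMap S T))).mp hsub
    have hQp : Q.IsPrime := IsAssociatedPrime.isPrime hQass
    have hQc : Q.comap (algebraMap S T) = maximalIdeal S :=
      ((maximalIdeal.isMaximal S).eq_of_le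
        (Ideal.IsPrime.ne_top (Ideal.IsPrime.comap (algebraMap S T))) hQle).symm
    obtain ⟨ys, hyd, hym, hyreg⟩ := hQ Q hQp hQc
    obtain ⟨u, hu⟩ : ∃ u : T, ∀ q : T, q ∈ Q ↔ q * u ∈ I := by
      obtain ⟨_, f, hf⟩ := (isAssociatedPrime_iff_exists_injective_linearMap Q (T ⧸ I)).mp hQass
      obtain ⟨u, hu⟩ := Ideal.Quotient.mk_surjective (f (Ideal.Quotient.mk Q 1))
      refine ⟨u, fun q => ?_⟩
      rw [← Ideal.Quotient.eq_zero_iff_mem, ← Ideal.Quotient.eq_zero_iff_mem, map_mul, hu,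
        ← map_eq_zero_iff f hf]
      have : Ideal.Quotient.mk Q q = q • Ideal.Quotient.mk Q 1 := by
        rw [Algebra.smul_def, map_one, mul_one]
        rfl
      rw [this, map_smul, Algebra.smul_def]
      rfl
    let B := Localization.AtPrime Q
    have hregT : IsWeaklyRegular T (rs.map (algebraMap S T)) :=
      (isWeaklyRegular_map_algebraMap_iff T T rs).mpr hreg
    have hregB := hregT.of_isLocalization B Q.primeCompl
    have hnoeth : IsNoetherianRing B := IsLocalization.isNoetherianRing Q.primeCompl B inferInstance
    obtain ⟨y, hy, hyI⟩ := exists_regular_of_length_lt ys hym hyreg _ hregB (by simp; omega)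
    rw [← Ideal.map_ofList, ← Ideal.map_ofList, ← hJ, ← hI] at hyI
    obtain ⟨⟨q, s⟩, hqs⟩ := IsLocalization.surj Q.primeCompl y
    have hq : q ∈ Q := by
      rw [← IsLocalization.AtPrime.to_map_mem_maximal_iff B Q, ← hqs]
      exact Ideal.mul_mem_right _ _ hy
    have h1 : algebraMap T B u ∈ I.map (algebraMap T B) := by
      apply hyI
      have h2 : algebraMap T B (q * u) ∈ I.map (algebraMap T B) :=
        Ideal.mem_map_of_mem _ ((hu q).mp hq)
      rw [map_mul, ← hqs, mul_comm y, mul_assoc] at h2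
      exact (Ideal.unit_mul_mem_iff_mem _ (IsLocalization.map_units B s)).mp h2
    rw [IsLocalization.algebraMap_mem_map_algebraMap_iff Q.primeCompl] at h1
    obtain ⟨m, hm, hmu⟩ := h1
    exact hm ((hu m).mpr hmu)

end MainLocal
section CMBasics

open RingTheory.Sequence IsLocalRing

theorem IsCohenMacaulayLocalRing.of_ringEquiv' {B C : Type*} [CommRing B] [IsLocalRing B]
    [CommRing C] [IsLocalRing C] (e : B ≃+* C) (h : IsCohenMacaulayLocalRing B) :
    IsCohenMacaulayLocalRing C := by
  obtain ⟨n, rs, hd, hl, hm, hr⟩ := h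
  refine ⟨n, rs.map e, by rw [← ringKrullDim_eq_of_ringEquiv e, hd], by simpa, ?_, ?_⟩
  · intro x hx
    obtain ⟨y, hy, rfl⟩ := List.mem_map.mp hx
    have := hm y hy
    rw [mem_maximalIdeal, mem_nonunits_iff] at this ⊢
    rwa [MulEquiv.isUnit_map]
  · refine ((AddEquiv.isRegular_congr (e := e.toAddEquiv) (as := rs) (bs := rs.map e) ?_)).mp hr
    rw [List.forall₂_map_right_iff, List.forall₂_same]
    intro r _ x
    simp

theorem cm_of_isLocalization {R : Type*} [CommRing R] (P : Ideal R) [P.IsPrime]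
    (C : Type*) [CommRing C] [IsLocalRing C] [Algebra R C] [IsLocalization.AtPrime C P]
    (h : IsCohenMacaulayLocalRing C) : IsCohenMacaulayLocalRing (Localization.AtPrime P) :=
  h.of_ringEquiv' (IsLocalization.algEquiv P.primeCompl C (Localization.AtPrime P)).toRingEquiv

theorem isLocalization_cm {R : Type*} [CommRing R] (P : Ideal R) [P.IsPrime]
    (C : Type*) [CommRing C] [IsLocalRing C] [Algebra R C] [IsLocalization.AtPrime C P]
    (h : IsCohenMacaulayLocalRing (Localization.AtPrime P)) : IsCohenMacaulayLocalRing C :=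
  h.of_ringEquiv' (IsLocalization.algEquiv P.primeCompl (Localization.AtPrime P) C).toRingEquiv

theorem IsCohenMacaulayRing.of_ringEquiv' {B C : Type*} [CommRing B] 
    [CommRing C] (e : B ≃+* C) (h : IsCohenMacaulayRing B) :
    IsCohenMacaulayRing C := by
  obtain ⟨hN, h⟩ := h
  refine ⟨isNoetherianRing_of_ringEquiv B e, fun P hP => ?_⟩
  have h1 := h (P.comap e) inferInstance
  refine h1.of_ringEquiv' (Localization.localRingEquiv _ _ e rfl)

theorem cm_local_of_retract {S T : Type*} [CommRing S] [CommRing T] [Algebra S T]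
    [IsNoetherianRing S] (hT : IsCohenMacaulayRing T) (P : Ideal S) [P.IsPrime]
    (ht : ∀ (Q : Ideal T) (_ : Q.IsPrime), Q.comap (algebraMap S T) = P → P.height ≤ Q.height)
    (ρ : T →ₗ[S] S) (c : S) (hc : c ∉ P) (hρ : ∀ s, ρ (algebraMap S T s) = c * s) :
    IsCohenMacaulayLocalRing (Localization.AtPrime P) := by
  let S' := Localization.AtPrime P
  let M := Algebra.algebraMapSubmonoid T P.primeCompl
  let T' := Localization M
  have : IsNoetherianRing S' := IsLocalization.isNoetherianRing P.primeCompl S' inferInstance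
  have hTN := hT.1
  have : IsNoetherianRing T' := IsLocalization.isNoetherianRing M T' inferInstance
  let : Algebra S' T' := localizationAlgebra P.primeCompl T
  have : IsScalarTower S S' T' := IsScalarTower.of_algebraMap_eq' 
    (by
      rw [RingHom.algebraMap_toAlgebra (R := S'), IsLocalization.map_comp]; rfl)
  have hdim : ringKrullDim S' = P.height := IsLocalization.AtPrime.ringKrullDim_eq_height P S'
  obtain ⟨d, hd⟩ : ∃ d : ℕ, P.height = d := 
    ⟨P.height.toNat, (ENat.natCast_toNat (Ideal.height_ne_top_of_isPrime)).symm⟩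
  have key := exists_weaklyRegular_of_localizations (S := S') (T := T') d (by
    intro Q hQ hQc
    let q := Q.comap (algebraMap T T')
    have hqp : q.IsPrime := inferInstance
    have hqP : q.comap (algebraMap S T) = P := by
      rw [Ideal.comap_comap, ← IsScalarTower.algebraMap_eq, IsScalarTower.algebraMap_eq S S' T',
        ← Ideal.comap_comap, hQc]
      exact IsLocalization.AtPrime.under_maximalIdeal S' P
    have : IsLocalization.AtPrime (Localization.AtPrime Q) q :=
      IsLocalization.isLocalization_isLocalization_atPrime_isLocalization M
        (Localization.AtPrime Q) Q
    obtain ⟨n, ys, h1, h2, h3, h4⟩ := isLocalization_cm q (Localization.AtPrime Q) (hT.2 q hqp)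
    refine ⟨ys, ?_, h3, h4⟩
    rw [IsLocalization.AtPrime.ringKrullDim_eq_height q] at h1
    have h5 := ht q hqp hqP
    rw [hd] at h5
    have h6 : q.height = n := by exact_mod_cast h1
    rw [h6] at h5
    rw [h2]
    exact_mod_cast h5) d le_rfl
  obtain ⟨rs, hl, hm, hr⟩ := key
  refine ⟨d, rs, by rw [hdim, hd]; rfl, hl, hm, ?_⟩
  rw [isRegular_iff_isWeaklyRegular_of_subset_maximalIdeal hm]
  let ρ' : T' →ₗ[S'] S' := IsLocalizedModule.mapExtendScalars P.primeCompl
    (IsScalarTower.toAlgHom S T T').toLinearMap (Algebra.linearMap S S') S' ρ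
  have hρ' : ∀ t, ρ' (algebraMap T T' t) = algebraMap S S' (ρ t) := fun t => 
    IsLocalizedModule.map_apply P.primeCompl (IsScalarTower.toAlgHom S T T').toLinearMap
      (Algebra.linearMap S S') ρ t
  refine isWeaklyRegular_of_retract (Algebra.linearMap S' T') ρ' (algebraMap S S' c)
    (IsLocalization.map_units S' (⟨c, hc⟩ : P.primeCompl)) ?_ rs hr
  intro s
  have h1 : ρ' 1 = algebraMap S S' c := by
    have := hρ' 1
    rw [map_one] at this
    rw [this, ← map_one (algebraMap S T), hρ, mul_one]
  rw [Algebra.linearMap_apply, Algebra.algebraMap_eq_smul_one, map_smul, h1, smul_eq_mul, 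
    smul_eq_mul, mul_comm]

end CMBasics
section CMPolynomial

open RingTheory.Sequence IsLocalRing Polynomial

theorem cm_poly_local (B : Type*) [CommRing B] [IsLocalRing B] [IsNoetherianRing B]
    (hB : IsCohenMacaulayLocalRing B) (p : Ideal B[X]) [p.IsPrime]
    (max : p.comap C = maximalIdeal B) :
    IsCohenMacaulayLocalRing (Localization.AtPrime p) := by
  obtain ⟨d, rs, hd, hl, hm, hr⟩ := hB
  let L := Localization.AtPrime p
  let q := (maximalIdeal B).map C
  have qle : q ≤ p := by simpa [q, ← max] using Ideal.map_comap_le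
  have hht : (maximalIdeal B).height = d := by
    have := maximalIdeal_height_eq_ringKrullDim (R := B)
    rw [hd] at this
    exact_mod_cast this
  have ht : q.height = d := by rw [← hht]; exact height_map_C (maximalIdeal B)
  have hreg : IsWeaklyRegular B[X] (rs.map (algebraMap B B[X])) := hr.toIsWeaklyRegular.of_flat
  have hmem : ∀ r ∈ rs.map (algebraMap B B[X]), r ∈ p := by
    intro r hr
    obtain ⟨s, hs, rfl⟩ := List.mem_map.mp hr
    exact qle (Ideal.mem_map_of_mem _ (hm s hs))
  have fin : ∀ (ts : List B[X]), IsWeaklyRegular B[X] ts → (∀ t ∈ ts, t ∈ p) →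
      p.height = ts.length → IsCohenMacaulayLocalRing L := by
    intro ts h1 h2 h3
    refine ⟨ts.length, ts.map (algebraMap B[X] L), ?_, by simp, ?_,
      h1.isRegular_of_isLocalization_of_mem L p h2⟩
    · rw [IsLocalization.AtPrime.ringKrullDim_eq_height p, h3]; rfl
    · intro x hx
      obtain ⟨t, ht, rfl⟩ := List.mem_map.mp hx
      exact (IsLocalization.AtPrime.to_map_mem_maximal_iff L p t).mpr (h2 t ht)
  by_cases eq : p = q
  · refine fin _ hreg hmem ?_
    rw [eq, ht]; simp [hl]
  · have lt : q < p := lt_of_le_of_ne qle (Ne.symm eq)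
    have : (Ideal.comap C p).IsMaximal := by simpa [max] using maximalIdeal.isMaximal B
    obtain ⟨y, hmon, hy⟩ := Polynomial.exists_monic_span_sup_map_eq B p this (by simpa [max])
    have hyp : y ∈ p := by
      rw [hy]
      exact Ideal.mem_sup_right (Ideal.mem_span_singleton_self y)
    refine fin (rs.map (algebraMap B B[X]) ++ [y]) ?_ ?_ ?_
    · rw [isWeaklyRegular_append_iff, isWeaklyRegular_singleton_iff,
        isSMulRegular_quotient_iff_mem_of_smul_mem]
      refine ⟨hreg, fun f hf => ?_⟩
      rw [← Ideal.map_ofList, smul_eq_mul, Ideal.mul_top] at hf ⊢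
      have hker : ∀ g : B[X], g ∈ (Ideal.ofList rs).map (algebraMap B B[X]) ↔
          g.map (Ideal.Quotient.mk (Ideal.ofList rs)) = 0 := by
        intro g
        rw [Polynomial.algebraMap_eq, Ideal.mem_map_C_iff, Polynomial.ext_iff]
        simp [Ideal.Quotient.eq_zero_iff_mem]
      rw [hker] at hf ⊢
      rw [smul_eq_mul, Polynomial.map_mul] at hf
      exact ((hmon.map _).mul_right_eq_zero_iff).mp hf
    · intro t ht
      rcases List.mem_append.mp ht with h | h
      · exact hmem t h
      · rw [List.mem_singleton.mp h]; exact hyp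
    · have : q.IsPrime := Ideal.isPrime_map_C_of_isPrime
      apply le_antisymm
      · have h1 := Ideal.height_le_ringKrullDim_of_isPrime (I := p)
        rw [Polynomial.ringKrullDim_of_isNoetherianRing, hd] at h1
        simp only [List.length_append, List.length_map, List.length_singleton, hl]
        exact_mod_cast h1
      · have h1 := Ideal.height_add_one_le_of_lt_of_isPrime lt
        rw [ht] at h1
        simpa [hl] using h1

theorem cm_poly (R : Type*) [CommRing R] (hR : IsCohenMacaulayRing R) :
    IsCohenMacaulayRing R[X] := by
  have hN := hR.1
  refine ⟨inferInstance, fun p hp => ?_⟩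
  let q := p.comap C
  let S := (Localization.AtPrime q)[X]
  let pc := Submonoid.map Polynomial.C.toMonoidHom q.primeCompl
  let : Algebra R[X] S := algebra R (Localization.AtPrime q)
  have : IsLocalization pc S := Polynomial.isLocalization _ _
  let pS := p.map (algebraMap R[X] S)
  have disj : Disjoint (pc : Set R[X]) (p : Set R[X]) := by
    simpa [pc, q] using! Set.disjoint_image_left.mpr
      (Set.disjoint_compl_left_iff_subset.mpr (fun _ a ↦ a))
  have : pS.IsPrime := IsLocalization.isPrime_of_isPrime_disjoint pc _ _ ‹_› disj
  have : IsLocalization.AtPrime (Localization.AtPrime pS) p := by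
    convert IsLocalization.isLocalization_isLocalization_atPrime_isLocalization pc
      (Localization.AtPrime pS) pS
    exact (IsLocalization.under_map_of_isPrime_disjoint pc _ ‹_› disj).symm
  have eq : Ideal.comap C pS = maximalIdeal (Localization.AtPrime q) := by
    rw [← IsLocalization.map_under q.primeCompl _ (Ideal.comap C pS),
      ← IsLocalization.map_under q.primeCompl _ (maximalIdeal (Localization.AtPrime q))]
    simp only [Ideal.comap_comap, S, pS]
    rw [← Polynomial.algebraMap_eq (R := Localization.AtPrime q),
      ← IsScalarTower.algebraMap_eq R (Localization.AtPrime q) (Localization.AtPrime q)[X],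
      IsScalarTower.algebraMap_eq R R[X] (Localization.AtPrime q)[X], ← Ideal.comap_comap,
      ← Ideal.under_def R[X], IsLocalization.under_map_of_isPrime_disjoint pc _ ‹_› disj]
    simp [q, IsLocalization.AtPrime.under_maximalIdeal (Localization.AtPrime q) q]
  have : IsNoetherianRing (Localization.AtPrime q) :=
    IsLocalization.isNoetherianRing q.primeCompl _ inferInstance
  exact cm_of_isLocalization p (Localization.AtPrime pS)
    (cm_poly_local _ (hR.2 q inferInstance) pS eq)

theorem cm_mvPolynomial (R : Type*) [CommRing R] (hR : IsCohenMacaulayRing R) (n : ℕ) :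
    IsCohenMacaulayRing (MvPolynomial (Fin n) R) := by
  induction n with
  | zero => exact hR.of_ringEquiv' (MvPolynomial.isEmptyRingEquiv R _).symm
  | succ n ih =>
    exact (cm_poly _ ih).of_ringEquiv' (MvPolynomial.finSuccEquiv R n).symm.toRingEquiv

theorem cm_dedekind (R : Type*) [CommRing R] [IsDedekindDomain R] : IsCohenMacaulayRing R := by
  refine ⟨inferInstance, fun P hP => ?_⟩
  by_cases h : P = ⊥
  · refine ⟨0, [], ?_, rfl, by simp, IsRegular.nil _ _⟩
    rw [IsLocalization.AtPrime.ringKrullDim_eq_height P, h, Ideal.height_bot]; rfl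
  · have hdvr : IsDiscreteValuationRing (Localization.AtPrime P) :=
      IsLocalization.AtPrime.isDiscreteValuationRing_of_dedekind_domain R h _
    obtain ⟨x, hx⟩ := IsDiscreteValuationRing.exists_irreducible (Localization.AtPrime P)
    have hxm : x ∈ maximalIdeal (Localization.AtPrime P) := by
      rw [mem_maximalIdeal]; exact hx.not_isUnit
    refine ⟨1, [x], ?_, rfl, by simpa using hxm, ?_⟩
    · exact IsPrincipalIdealRing.ringKrullDim_eq_one _
        (IsDiscreteValuationRing.not_isField _)
    · rw [isRegular_iff_isWeaklyRegular_of_subset_maximalIdeal (by simpa using hxm),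
        isWeaklyRegular_singleton_iff]
      exact fun a b hab => mul_left_cancel₀ hx.ne_zero hab

end CMPolynomial

open scoped Pointwise in
theorem hasGoingDown_of_invariant (S T R Γ : Type*) [CommRing S] [CommRing T] [CommRing R] [IsDomain R]
    [Algebra S T] [Algebra T R] [Algebra S R] [IsScalarTower S T R]
    [Group Γ] [Finite Γ] [MulSemiringAction Γ R] [Algebra.IsInvariant S R Γ]
    [SMulCommClass Γ S R] (hT : Function.Injective (algebraMap T R))
    (hS : Function.Injective (algebraMap S R)) :
    Algebra.HasGoingDown S T := by
  have hintegral : Algebra.IsIntegral S R := Algebra.IsInvariant.isIntegral S R Γ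
  have hintegral2 : Algebra.IsIntegral T R := Algebra.IsIntegral.tower_top S
  refine ⟨fun {p} hp Q hQ hlt => ?_⟩
  obtain ⟨Q', hQ', hQQ⟩ := Ideal.exists_ideal_over_prime_of_isIntegral_of_isDomain
    (S := R) Q (by rw [(RingHom.injective_iff_ker_eq_bot _).1 hT]; exact bot_le)
  obtain ⟨p', hp', hpp⟩ := Ideal.exists_ideal_over_prime_of_isIntegral_of_isDomain
    (S := R) p (by rw [(RingHom.injective_iff_ker_eq_bot _).1 hS]; exact bot_le)
  obtain ⟨P1, hP1le, hP1, hP1e⟩ := Ideal.exists_ideal_over_prime_of_isIntegral_of_isPrime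
    (Q.under S) p' (by rw [hpp]; exact hlt.le)
  have hQS : Q'.under S = Q.under S := by
    rw [← hQQ]
    change Q'.comap _ = (Q'.comap _).comap _
    rw [Ideal.comap_comap, ← IsScalarTower.algebraMap_eq]
  obtain ⟨g, hg⟩ := Algebra.IsInvariant.exists_smul_of_under_eq S R Γ P1 Q'
    (hP1e.trans hQS.symm)
  have hlo : p'.LiesOver p := ⟨hpp.symm⟩
  have hlo2 : (g • p').LiesOver p := hlo.smul g
  have hpr : (g • p').IsPrime := hp'.smul g
  refine ⟨(g • p').comap (algebraMap T R), ?_, Ideal.comap_isPrime _ _, ⟨?_⟩⟩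
  · rw [← hQQ]
    apply Ideal.comap_mono
    rw [hg]
    exact Ideal.map_mono hP1le
  · rw [hlo2.over]
    change (g • p').comap _ = ((g • p').comap _).comap _
    rw [Ideal.comap_comap, ← IsScalarTower.algebraMap_eq]

theorem height_le_of_goingDown {S T : Type*} [CommRing S] [CommRing T] [Algebra S T]
    [Algebra.HasGoingDown S T] [IsNoetherianRing S] [IsNoetherianRing T] (P : Ideal S) [P.IsPrime]
    (Q : Ideal T) (hQ : Q.IsPrime) (h : Q.comap (algebraMap S T) = P) : P.height ≤ Q.height := by
  have : Q.LiesOver P := ⟨h.symm⟩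
  rw [Ideal.height_eq_height_add_of_liesOver_of_hasGoingDown P Q]
  exact le_self_add

theorem noetherian_of_invariant (A S R Γ : Type*) [CommRing A] [IsNoetherianRing A]
    [CommRing S] [CommRing R] [Algebra A S] [Algebra A R] [Algebra S R] [IsScalarTower A S R]
    [Algebra.FiniteType A R]
    [Group Γ] [Finite Γ] [MulSemiringAction Γ R] [Algebra.IsInvariant S R Γ]
    [SMulCommClass Γ S R] (hS : Function.Injective (algebraMap S R)) :
    IsNoetherianRing S := by
  have hintegral : Algebra.IsIntegral S R := Algebra.IsInvariant.isIntegral S R Γ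
  have hft : Algebra.FiniteType S R := Algebra.FiniteType.of_restrictScalars_finiteType A S R
  have hfin : Module.Finite S R := Algebra.IsIntegral.finite
  have hfg := fg_of_fg_of_fg A S R Algebra.FiniteType.out Module.Finite.fg_top hS
  have : Algebra.FiniteType A S := ⟨hfg⟩
  exact Algebra.FiniteType.isNoetherianRing A S

theorem exists_relative_trace {A R Γ : Type*} [CommRing A] [CommRing R] [Algebra A R]
    [Group Γ] [Finite Γ] [MulSemiringAction Γ R] (H : Subgroup Γ) (S T : Subalgebra A R)
    (hS : ∀ f, f ∈ S ↔ ∀ g : Γ, g • f = f) (hT : ∀ f, f ∈ T ↔ ∀ g ∈ H, g • f = f)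
    (hST : S ≤ T) :
    letI := (Subalgebra.inclusion hST).toRingHom.toAlgebra
    ∃ ρ : T →ₗ[S] S, ∀ s : S, ρ (algebraMap S T s) = (H.index : S) * s := by
  letI := (Subalgebra.inclusion hST).toRingHom.toAlgebra
  cases nonempty_fintype (Γ ⧸ H)
  have key : ∀ t ∈ T, ∀ a : Γ, (QuotientGroup.mk a : Γ ⧸ H).out • t = a • t := by
    intro t ht a
    obtain ⟨h, hh⟩ := QuotientGroup.mk_out_eq_mul H a
    rw [hh, mul_smul, (hT t).1 ht h h.2]
  have hmem : ∀ t ∈ T, (∑ q : Γ ⧸ H, q.out • t) ∈ S := by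
    intro t ht
    rw [hS]
    intro g
    rw [Finset.smul_sum]
    refine Fintype.sum_equiv (MulAction.toPerm g) _ _ ?_
    intro q
    induction q using QuotientGroup.induction_on with
    | H a =>
      rw [key t ht a]
      change _ = (QuotientGroup.mk (g * a) : Γ ⧸ H).out • t
      rw [key t ht, mul_smul]
  refine ⟨{ toFun := fun t => ⟨∑ q : Γ ⧸ H, q.out • (t : R), hmem t t.2⟩
            map_add' := ?_
            map_smul' := ?_ }, ?_⟩
  · intro x y
    ext
    simp [smul_add, Finset.sum_add_distrib]
  · intro s x
    ext
    simp only [RingHom.id_apply, smul_eq_mul, MulMemClass.coe_mul, Finset.mul_sum]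
    refine Finset.sum_congr rfl fun q _ => ?_
    change q.out • ((s : R) * (x : R)) = _
    rw [smul_mul', (hS s).1 s.2]
  · intro s
    ext
    change ∑ q : Γ ⧸ H, q.out • (s : R) = _
    simp only [(hS s).1 s.2, Finset.sum_const, Finset.card_univ, nsmul_eq_mul,
      MulMemClass.coe_mul]
    rw [Subgroup.index, Nat.card_eq_fintype_card]
    simp

theorem cm_local_invariants {A R Γ : Type*} [CommRing A] [IsNoetherianRing A] [CommRing R]
    [IsDomain R] [Algebra A R] [Algebra.FiniteType A R]
    [Group Γ] [Finite Γ] [MulSemiringAction Γ R] (H : Subgroup Γ) (S T : Subalgebra A R)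
    [IsNoetherianRing S]
    (hS : ∀ f, f ∈ S ↔ ∀ g : Γ, g • f = f) (hT : ∀ f, f ∈ T ↔ ∀ g ∈ H, g • f = f)
    (hCM : IsCohenMacaulayRing T) (P : Ideal S) [P.IsPrime] (hP : (H.index : S) ∉ P) :
    IsCohenMacaulayLocalRing (Localization.AtPrime P) := by
  have hST : S ≤ T := fun f hf => (hT f).2 fun g _ => (hS f).1 hf g
  obtain ⟨ρ, hρ⟩ := exists_relative_trace H S T hS hT hST
  letI := (Subalgebra.inclusion hST).toRingHom.toAlgebra
  haveI : IsScalarTower S T R := IsScalarTower.of_algebraMap_eq fun _ => rfl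
  haveI : Algebra.IsInvariant S R Γ := ⟨fun b hb => ⟨⟨b, (hS b).2 hb⟩, rfl⟩⟩
  haveI : SMulCommClass Γ S R := ⟨fun g s r => by
    change g • ((s : R) * r) = s * g • r
    rw [smul_mul', (hS s).1 s.2]⟩
  haveI := hCM.1
  haveI := hasGoingDown_of_invariant S T R Γ Subtype.val_injective Subtype.val_injective
  exact cm_local_of_retract hCM P (fun Q hQ h => height_le_of_goingDown P Q hQ h) ρ _ hP hρ

theorem cm_invariants {A R Γ : Type*} [CommRing A] [IsNoetherianRing A] [CommRing R]
    [IsDomain R] [Algebra A R] [Algebra.FiniteType A R]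
    [Group Γ] [Finite Γ] [MulSemiringAction Γ R] (S : Subalgebra A R)
    (hS : ∀ f, f ∈ S ↔ ∀ g : Γ, g • f = f)
    (hR : IsCohenMacaulayRing R)
    (Hp : ∀ (p : ℕ), p.Prime → p ∣ Nat.card Γ → Sylow p Γ)
    (T : ∀ (p : ℕ), p.Prime → p ∣ Nat.card Γ → Subalgebra A R)
    (hT : ∀ p hp hd, ∀ f, f ∈ T p hp hd ↔ ∀ g ∈ (Hp p hp hd : Subgroup Γ), g • f = f)
    (hCM : ∀ p hp hd, IsCohenMacaulayRing (T p hp hd)) :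
    IsCohenMacaulayRing S := by
  haveI : IsNoetherianRing S := by
    haveI : Algebra.IsInvariant S R Γ := ⟨fun b hb => ⟨⟨b, (hS b).2 hb⟩, rfl⟩⟩
    haveI : SMulCommClass Γ S R := ⟨fun g s r => by
      change g • ((s : R) * r) = s * g • r
      rw [smul_mul', (hS s).1 s.2]⟩
    exact noetherian_of_invariant A S R Γ Subtype.val_injective
  by_cases h1 : Nat.card Γ = 1
  · have hsub : Subsingleton Γ := (Nat.card_eq_one_iff_unique.1 h1).1
    have htop : S = ⊤ := by
      ext f
      simp only [hS, Algebra.mem_top, iff_true]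
      intro g
      rw [Subsingleton.elim g 1, one_smul]
    rw [htop]
    exact IsCohenMacaulayRing.of_ringEquiv' (Subalgebra.topEquiv (R := A) (A := R)).symm.toRingEquiv hR
  refine ⟨inferInstance, fun P hP => ?_⟩
  by_cases hc : ((Nat.card Γ : ℕ) : S) ∈ P
  · have : ∃ p : ℕ, p.Prime ∧ p ∣ Nat.card Γ ∧ (p : S) ∈ P := by
      have hne : Nat.card Γ ≠ 0 := Nat.card_pos.ne'
      rw [← Nat.prod_primeFactorsList hne, Nat.cast_list_prod, ← Multiset.prod_coe,
        hP.multiset_prod_mem_iff_exists_mem] at hc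
      obtain ⟨x, hx, hxP⟩ := hc
      rw [Multiset.mem_coe] at hx
      obtain ⟨p, hp, rfl⟩ := List.mem_map.1 hx
      exact ⟨p, Nat.prime_of_mem_primeFactorsList hp, Nat.dvd_of_mem_primeFactorsList hp, hxP⟩
    obtain ⟨p, hp, hd, hpP⟩ := this
    refine cm_local_invariants (Hp p hp hd : Subgroup Γ) S (T p hp hd) hS (hT p hp hd)
      (hCM p hp hd) P ?_
    intro hi
    haveI := Fact.mk hp
    have hcop : Nat.Coprime p (Hp p hp hd : Subgroup Γ).index :=
      (Nat.Prime.coprime_iff_not_dvd hp).2 (Hp p hp hd).not_dvd_index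
    have hic := Nat.isCoprime_iff_coprime.2 hcop
    obtain ⟨a, b, hab⟩ := hic
    apply hP.ne_top
    rw [Ideal.eq_top_iff_one]
    have h2 : ((a : S) * (p : S) + (b : S) * ((Hp p hp hd : Subgroup Γ).index : S)) = 1 := by
      exact_mod_cast congrArg (Int.cast : ℤ → S) hab
    rw [← h2]
    exact P.add_mem (P.mul_mem_left _ hpP) (P.mul_mem_left _ hi)
  · obtain ⟨p, hp, hd⟩ := Nat.exists_prime_and_dvd h1
    refine cm_local_invariants (Hp p hp hd : Subgroup Γ) S (T p hp hd) hS (hT p hp hd)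
      (hCM p hp hd) P ?_
    intro hi
    apply hc
    rw [← Subgroup.card_mul_index (Hp p hp hd : Subgroup Γ), Nat.cast_mul]
    exact P.mul_mem_left _ hi

/-- The algebra endomorphism of `A[X]` attached to a matrix. -/
noncomputable def glAct {A : Type*} [CommRing A] {n : ℕ}
    (g : Matrix.GeneralLinearGroup (Fin n) A) :
    MvPolynomial (Fin n) A →ₐ[A] MvPolynomial (Fin n) A :=
  MvPolynomial.aeval
      (fun i => ∑ j, ((g : Matrix (Fin n) (Fin n) A) i j) • MvPolynomial.X j)

theorem glAct_mul {A : Type*} [CommRing A] {n : ℕ}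
    (g h : Matrix.GeneralLinearGroup (Fin n) A) :
    (glAct (g * h)) = (glAct h).comp (glAct g) := by
  apply MvPolynomial.algHom_ext
  intro i
  simp only [glAct, MvPolynomial.aeval_X, AlgHom.comp_apply, map_sum, map_smul, Finset.smul_sum,
    Matrix.GeneralLinearGroup.coe_mul, Matrix.mul_apply, Finset.sum_smul, smul_smul]
  rw [Finset.sum_comm]

theorem glAct_one {A : Type*} [CommRing A] {n : ℕ} :
    (glAct (1 : Matrix.GeneralLinearGroup (Fin n) A)) = AlgHom.id _ _ := by
  apply MvPolynomial.algHom_ext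
  intro i
  simp [glAct, Matrix.one_apply]

/-- The action of a group of matrices on the polynomial ring. -/
@[reducible] noncomputable def glAction {A : Type*} [CommRing A] {n : ℕ}
    (G : Subgroup (Matrix.GeneralLinearGroup (Fin n) A)) :
    MulSemiringAction G (MvPolynomial (Fin n) A) where
  smul g f := glAct (g : Matrix.GeneralLinearGroup (Fin n) A)⁻¹ f
  one_smul f := by
    change glAct ((1 : G) : Matrix.GeneralLinearGroup (Fin n) A)⁻¹ f = f
    rw [OneMemClass.coe_one, inv_one, glAct_one]
    rfl
  mul_smul g h f := by
    change glAct ((g * h : G) : Matrix.GeneralLinearGroup (Fin n) A)⁻¹ f =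
      glAct (g : Matrix.GeneralLinearGroup (Fin n) A)⁻¹
        (glAct (h : Matrix.GeneralLinearGroup (Fin n) A)⁻¹ f)
    rw [MulMemClass.coe_mul, mul_inv_rev, glAct_mul]
    rfl
  smul_zero g := map_zero (glAct _)
  smul_add g := map_add (glAct _)
  smul_one g := map_one (glAct _)
  smul_mul g := map_mul (glAct _)

theorem main_of_cm
    (A : Type) [CommRing A] [IsDomain A] (hA : IsCohenMacaulayRing A)
    (n : ℕ) (G : Subgroup (Matrix.GeneralLinearGroup (Fin n) A)) [Finite ↥G]
    (Hp : ∀ (p : ℕ), p.Prime → p ∣ Nat.card ↥G → Sylow p ↥G)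
    (hCM : ∀ (p : ℕ) (hp : p.Prime) (hdvd : p ∣ Nat.card ↥G),
      IsCohenMacaulayRing
        ↥(glInvariants ((Hp p hp hdvd : Subgroup ↥G).map G.subtype))) :
    IsCohenMacaulayRing ↥(glInvariants G) := by
  letI := glAction G
  haveI : IsNoetherianRing A := hA.1
  refine cm_invariants (Γ := G) (glInvariants G) ?_
    (cm_mvPolynomial A hA n) Hp
    (fun p hp hd => glInvariants ((Hp p hp hd : Subgroup ↥G).map G.subtype)) ?_ hCM
  · intro f
    constructor
    · intro hf g
      exact hf _ (G.inv_mem g.2)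
    · intro hf g hg
      have := hf ⟨g⁻¹, G.inv_mem hg⟩
      change glAct (g⁻¹)⁻¹ f = f at this
      rw [inv_inv] at this
      exact this
  · intro p hp hd f
    constructor
    · intro hf g hg
      exact hf _ ⟨g⁻¹, inv_mem hg, rfl⟩
    · rintro hf _ ⟨g, hg, rfl⟩
      have := hf g⁻¹ (inv_mem hg)
      change glAct ((g⁻¹ : G) : Matrix.GeneralLinearGroup (Fin n) A)⁻¹ f = f at this
      rw [InvMemClass.coe_inv, inv_inv] at this
      exact this

theorem noetherian_of_finite_comp {P B D : Type*} [CommRing P] [IsNoetherianRing P] [CommRing B]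
    [CommRing D] (h : P →+* B) (g : B →+* D) (hg : Function.Injective g)
    (hf : (g.comp h).Finite) : IsNoetherianRing B := by
  letI := h.toAlgebra
  letI := (g.comp h).toAlgebra
  haveI : Module.Finite P D := hf
  haveI : IsNoetherian P D := inferInstance
  let l : B →ₗ[P] D :=
    { toFun := g
      map_add' := map_add g
      map_smul' := fun p b => by
        rw [RingHom.id_apply, Algebra.smul_def, Algebra.smul_def, map_mul]
        rfl }
  have : IsNoetherian P B := isNoetherian_of_injective l hg
  exact isNoetherianRing_iff.2 (isNoetherian_of_tower P this)

theorem iterateFrobenius_poly_finite (F : Type*) [Field F] [Finite F] (p m : ℕ)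
    [ExpChar (Polynomial F) p] :
    (iterateFrobenius (Polynomial F) p m).Finite := by
  apply RingHom.IsIntegral.to_finite
  · intro f
    refine ⟨Polynomial.X ^ (p ^ m) - Polynomial.C f,
      Polynomial.monic_X_pow_sub_C f (expChar_pow_pos (Polynomial F) p m).ne', ?_⟩
    simp [iterateFrobenius_def]
  · haveI : Algebra.FiniteType ℤ F := inferInstance
    have h : Algebra.FiniteType ℤ (Polynomial F) := Algebra.FiniteType.trans (S := F) inferInstance inferInstance
    have h2 := RingHom.finiteType_algebraMap.2 h
    apply RingHom.FiniteType.of_comp_finiteType (f := algebraMap ℤ (Polynomial F))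
    convert h2 using 1
    exact RingHom.ext_int _ _

theorem functionField_noetherian (F K : Type*) [Field F] [Finite F] [Field K]
    [Algebra (Polynomial F) K] [Algebra (RatFunc F) K]
    [IsScalarTower (Polynomial F) (RatFunc F) K] [FunctionField F K] :
    IsNoetherianRing (FunctionField.ringOfIntegers F K) := by
  let L := separableClosure (RatFunc F) K
  obtain ⟨p, hp⟩ := ExpChar.exists F
  haveI : ExpChar (Polynomial F) p := expChar_of_injective_algebraMap (R := F) Polynomial.C_injective p
  haveI : ExpChar (RatFunc F) p := expChar_of_injective_algebraMap
    (IsFractionRing.injective (Polynomial F) (RatFunc F)) p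
  haveI : ExpChar L p := expChar_of_injective_algebraMap (algebraMap (RatFunc F) L).injective p
  haveI : ExpChar K p := expChar_of_injective_algebraMap (algebraMap (RatFunc F) K).injective p
  haveI : FiniteDimensional L K := inferInstance
  haveI : IsPurelyInseparable L K := inferInstance
  haveI : IsScalarTower (Polynomial F) L K := IsScalarTower.of_algebraMap_eq fun _ => rfl
  let m := IsPurelyInseparable.exponent L K
  let φ : K →+* L := IsPurelyInseparable.iterateFrobenius L K p (n := m) le_rfl
  have hφ : ∀ x, algebraMap L K (φ x) = x ^ p ^ m :=
    fun x => IsPurelyInseparable.algebraMap_iterateFrobenius L p le_rfl x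
  haveI hN : IsNoetherian (Polynomial F) (integralClosure (Polynomial F) L) :=
    IsIntegralClosure.isNoetherian (Polynomial F) (RatFunc F) L _
  have hintegral : ∀ x : FunctionField.ringOfIntegers F K,
      φ x ∈ integralClosure (Polynomial F) L := by
    intro x
    have hx : IsIntegral (Polynomial F) (x : K) := x.2
    have h2 := hx.pow (p ^ m)
    rw [← hφ] at h2
    exact (isIntegral_algHom_iff (IsScalarTower.toAlgHom (Polynomial F) L K)
      (algebraMap L K).injective).1 h2
  let g : FunctionField.ringOfIntegers F K →+* integralClosure (Polynomial F) L :=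
    (φ.comp (FunctionField.ringOfIntegers F K).val.toRingHom).codRestrict _ hintegral
  refine noetherian_of_finite_comp (algebraMap (Polynomial F) (FunctionField.ringOfIntegers F K))
    g ?_ ?_
  · intro x y hxy
    have h1 : φ x = φ y := congrArg Subtype.val hxy
    exact Subtype.ext (φ.injective h1)
  · have : g.comp (algebraMap (Polynomial F) (FunctionField.ringOfIntegers F K)) =
        (algebraMap (Polynomial F) (integralClosure (Polynomial F) L)).comp
          (iterateFrobenius (Polynomial F) p m) := by
      refine RingHom.ext fun f => ?_
      apply Subtype.ext
      apply (algebraMap L K).injective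
      change algebraMap L K (φ (algebraMap (Polynomial F) K f)) =
        algebraMap L K (algebraMap (Polynomial F) L (iterateFrobenius (Polynomial F) p m f))
      rw [hφ, ← IsScalarTower.algebraMap_apply, iterateFrobenius_def, map_pow]
    rw [this]
    refine RingHom.Finite.comp ?_ (iterateFrobenius_poly_finite F p m)
    exact RingHom.finite_algebraMap.2 inferInstance

theorem functionField_dedekind (F K : Type*) [Field F] [Finite F] [Field K]
    [Algebra (Polynomial F) K] [Algebra (RatFunc F) K]
    [IsScalarTower (Polynomial F) (RatFunc F) K] [FunctionField F K] :
    IsDedekindDomain (FunctionField.ringOfIntegers F K) := by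
  haveI := functionField_noetherian F K
  haveI : Ring.DimensionLEOne (FunctionField.ringOfIntegers F K) :=
    Ring.DimensionLEOne.integralClosure (Polynomial F) K
  haveI : IsIntegrallyClosed (FunctionField.ringOfIntegers F K) := inferInstance
  exact { }

/-- Let `A` be the ring of integers of a global field and let `G ⊆ GL_n(A)` be a finite
group acting linearly on `R = A[X_1, …, X_n]` (fixing `A`). For each prime `p` dividing
`|G|` choose a Sylow `p`-subgroup `H_p` of `G`. If `R^{H_p}` is Cohen–Macaulay for all
primes `p` dividing `|G|`, then `R^G` is Cohen–Macaulay. -/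
theorem sylow_reduction_invariants_cohenMacaulay
    (A : Type) [CommRing A] (hA : IsRingOfIntegersOfGlobalField A)
    (n : ℕ) (G : Subgroup (Matrix.GeneralLinearGroup (Fin n) A)) [Finite ↥G]
    (Hp : ∀ (p : ℕ), p.Prime → p ∣ Nat.card ↥G → Sylow p ↥G)
    (hCM : ∀ (p : ℕ) (hp : p.Prime) (hdvd : p ∣ Nat.card ↥G),
      IsCohenMacaulayRing
        ↥(glInvariants ((Hp p hp hdvd : Subgroup ↥G).map G.subtype))) :
    IsCohenMacaulayRing ↥(glInvariants G) := by
  have h : IsDomain A ∧ IsCohenMacaulayRing A := by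
    rcases hA with ⟨⟨D⟩⟩ | ⟨⟨D⟩⟩
    · letI := D.fieldK
      haveI := D.numberField
      exact ⟨D.equiv.toMulEquiv.isDomain _, IsCohenMacaulayRing.of_ringEquiv' D.equiv.symm
        (cm_dedekind (NumberField.RingOfIntegers D.K))⟩
    · letI := D.fieldFq
      haveI := D.finiteFq
      letI := D.fieldK
      letI := D.algP
      letI := D.algR
      haveI := D.tower
      haveI := D.functionField
      haveI := functionField_dedekind D.Fq D.K
      exact ⟨D.equiv.toMulEquiv.isDomain _, IsCohenMacaulayRing.of_ringEquiv' D.equiv.symm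
        (cm_dedekind (FunctionField.ringOfIntegers D.Fq D.K))⟩
  haveI := h.1
  exact main_of_cm A h.2 n G Hp hCM
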